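/- Let A be the n×n matrix with (i,j) entry (i+j−1)^(i+j−1) for 1 ≤ i, j ≤ n. Then for every real number r > 0, the entrywise power A^{∘r} (with (i,j) entry (i+j−1)^{(i+j−1)r}) is strictly totally positive: every minor of A^{∘r} is strictly positive. -/

import Mathlib

/-!
A Hankel matrix `(a (i + j))` which is positive definite together with its shift `(a (i + j + 1))`
is strictly totally positive. Diagonalising the pair by one congruence gives
`a m = ∑ b, w b * d b ^ m` for positive weights and distinct positive nodes, and Cauchy–Binet then
writes every minor as a sum of products of two generalised Vandermonde determinants
`det (d (b i) ^ f j)`, which are nonzero with a common sign by Rolle's theorem.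

So only positive definiteness of `(s ^ (s * r))`, with `s = x i + x j`, is needed. On coefficient
vectors `c` with zero sum, `∑ c i * c j * φ (x i + x j + t)` tends to zero as `t → ∞` for both
`φ = log` and `φ z = z log z`, so its sign at `t = 0` is read off its derivative: the positive
definite Cauchy matrix settles `log`, and `log` settles `z log z`. Adding the node `0` makes
`φ (x i + x j) - φ (x i) - φ (x j)` positive definite, and the Schur product theorem applied to the
exponential series turns this additive statement into the multiplicative one.
-/

open Filter Matrix Topology

section ExponentialKernel

theorem eq_zero_of_forall_sum_mul_exp_eq_zero {n : ℕ} {c x t : Fin n → ℝ} (hx : StrictMono x)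
    (ht : StrictMono t) (h : ∀ j, ∑ i, c i * Real.exp (x i * t j) = 0) : c = 0 := by
  induction n with
  | zero => exact Subsingleton.elim _ _
  | succ n ih =>
    let F : ℝ → ℝ := fun u => ∑ i, c i * Real.exp ((x i - x 0) * u)
    let F' : ℝ → ℝ := fun u => ∑ i, c i * (x i - x 0) * Real.exp ((x i - x 0) * u)
    have hF (j) : F (t j) = 0 := by
      have : F (t j) = Real.exp (-(x 0 * t j)) * ∑ i, c i * Real.exp (x i * t j) := by
        rw [Finset.mul_sum]
        refine Finset.sum_congr rfl fun i _ => ?_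
        rw [mul_left_comm, ← Real.exp_add]
        ring_nf
      rw [this, h j, mul_zero]
    have hderiv (u : ℝ) : HasDerivAt F (F' u) u :=
      HasDerivAt.fun_sum fun i _ =>
        ((((hasDerivAt_id u).const_mul (x i - x 0)).exp).const_mul (c i)).congr_deriv
          (by simp only [id]; ring)
    have hrolle (j : Fin n) : ∃ u ∈ Set.Ioo (t j.castSucc) (t j.succ), F' u = 0 :=
      exists_hasDerivAt_eq_zero (ht j.castSucc_lt_succ)
        (fun u _ => (hderiv u).continuousAt.continuousWithinAt) (by rw [hF, hF])
        fun u _ => hderiv u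
    choose u hu hF'u using hrolle
    have hu_mono : StrictMono u := fun i j hij =>
      (hu i).2.trans_le ((ht.monotone (Fin.succ_le_castSucc_iff.2 hij)).trans (hu j).1.le)
    have hx_succ (i : Fin n) : 0 < x i.succ - x 0 := sub_pos.2 (hx i.succ_pos)
    have hc_succ : (fun i : Fin n => c i.succ * (x i.succ - x 0)) = 0 :=
      ih (fun i j hij => sub_lt_sub_right (hx (Fin.succ_lt_succ_iff.2 hij)) (x 0)) hu_mono
        fun j => by simpa [F', Fin.sum_univ_succ] using hF'u j
    have hc (i : Fin n) : c i.succ = 0 :=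
      (mul_eq_zero.1 (congrFun hc_succ i)).resolve_right (hx_succ i).ne'
    have hc0 : c 0 = 0 := by
      simpa [Fin.sum_univ_succ, hc, Real.exp_ne_zero] using h 0
    exact funext (Fin.cases hc0 hc)

theorem det_exp_mul_ne_zero {k : ℕ} {x t : Fin k → ℝ} (hx : StrictMono x) (ht : StrictMono t) :
    (of fun i j => Real.exp (x i * t j)).det ≠ 0 := by
  intro h
  obtain ⟨c, hc, hc0⟩ := exists_vecMul_eq_zero_iff.2 h
  exact hc (eq_zero_of_forall_sum_mul_exp_eq_zero hx ht fun j => by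
    simpa [vecMul, dotProduct] using congrFun hc0 j)

theorem convex_setOf_strictMono {ι : Type*} [Preorder ι] :
    Convex ℝ {x : ι → ℝ | StrictMono x} := by
  rw [convex_iff_forall_pos]
  intro x hx y hy a b ha hb _
  exact (hx.const_mul ha).add (hy.const_mul hb)

theorem det_exp_mul_pos {k : ℕ} {x t : Fin k → ℝ} (hx : StrictMono x) (ht : StrictMono t) :
    0 < (of fun i j => Real.exp (x i * t j)).det := by
  let D : (Fin k → ℝ) → ℝ := fun x => (of fun i j => Real.exp (x i * t j)).det
  have hD : Continuous D :=
    Continuous.matrix_det (continuous_matrix fun i j => by simp only [of_apply]; fun_prop)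
  let x₀ : Fin k → ℝ := fun i => (i : ℕ)
  have hx₀ : StrictMono x₀ := fun i j hij => Nat.cast_lt.2 hij
  have hD₀ : 0 < D x₀ := by
    have : (of fun i j => Real.exp (x₀ i * t j)) = (vandermonde fun j => Real.exp (t j))ᵀ := by
      ext i j
      simp [x₀, vandermonde_apply, Real.exp_nat_mul]
    simp only [D, this, det_transpose, det_vandermonde]
    exact Finset.prod_pos fun i _ => Finset.prod_pos fun j hj =>
      sub_pos.2 (Real.exp_lt_exp.2 (ht (Finset.mem_Ioi.1 hj)))
  by_contra! hneg
  obtain ⟨z, hz, hDz⟩ := (convex_setOf_strictMono (ι := Fin k)).isPreconnected.intermediate_value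
    hx hx₀ hD.continuousOn ⟨hneg, hD₀.le⟩
  exact det_exp_mul_ne_zero hz ht hDz

theorem det_exp_mul_det_exp_pos {k : ℕ} {s x y : Fin k → ℝ} (hs : Function.Injective s)
    (hx : StrictMono x) (hy : StrictMono y) :
    0 < (of fun i j => Real.exp (s i * x j)).det * (of fun i j => Real.exp (s i * y j)).det := by
  let σ := Tuple.sort s
  have hsσ : StrictMono (s ∘ σ) :=
    (Tuple.monotone_sort s).strictMono_of_injective (hs.comp σ.injective)
  have hdet (z : Fin k → ℝ) : (of fun i j => Real.exp ((s ∘ σ) i * z j)).det =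
      (Equiv.Perm.sign σ : ℤ) * (of fun i j => Real.exp (s i * z j)).det :=
    det_permute σ (of fun i j => Real.exp (s i * z j))
  have hpos := mul_pos (det_exp_mul_pos hsσ hx) (det_exp_mul_pos hsσ hy)
  rw [hdet, hdet, mul_mul_mul_comm, ← Int.cast_mul, ← Units.val_mul, Int.units_mul_self] at hpos
  simpa using hpos

theorem det_pow_mul_det_pow_pos {k : ℕ} {d : Fin k → ℝ} (hd : Function.Injective d)
    (hd0 : ∀ i, 0 < d i) {f g : Fin k → ℕ} (hf : StrictMono f) (hg : StrictMono g) :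
    0 < (of fun i j => d i ^ f j).det * (of fun i j => d i ^ g j).det := by
  have hexp (h : Fin k → ℕ) : (of fun i j => d i ^ h j) =
      of fun i j => Real.exp (Real.log (d i) * (h j : ℝ)) := by
    ext i j
    rw [of_apply, of_apply, mul_comm, Real.exp_nat_mul, Real.exp_log (hd0 i)]
  rw [hexp, hexp]
  exact det_exp_mul_det_exp_pos (fun i j hij => hd (Real.log_injOn_pos (hd0 i) (hd0 j) hij))
    (Nat.strictMono_cast.comp hf) (Nat.strictMono_cast.comp hg)

theorem det_pow_mul_det_pow_nonneg {k : ℕ} {d : Fin k → ℝ} (hd0 : ∀ i, 0 < d i)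
    {f g : Fin k → ℕ} (hf : StrictMono f) (hg : StrictMono g) :
    0 ≤ (of fun i j => d i ^ f j).det * (of fun i j => d i ^ g j).det := by
  by_cases hd : Function.Injective d
  · exact (det_pow_mul_det_pow_pos hd hd0 hf hg).le
  · obtain ⟨i, j, hij, hne⟩ := Function.not_injective_iff.1 hd
    have hrow : (of fun i j => d i ^ f j).det = 0 := det_zero_of_row_eq hne (by ext l; simp [hij])
    rw [hrow, zero_mul]

end ExponentialKernel

section CauchyBinet

variable {R m : Type*} [CommRing R] [Fintype m] {k : ℕ}

theorem det_mul_eq_sum_prod_mul_det (M : Matrix (Fin k) m R) (N : Matrix m (Fin k) R) :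
    (M * N).det = ∑ a : Fin k → m, (∏ i, M i (a i)) * (N.submatrix a id).det := by
  classical
  have hrows : M * N = fun i => ∑ a, M i a • N a := by
    ext i j
    simp [mul_apply]
  rw [hrows]
  change detRowAlternating.toMultilinearMap _ = _
  rw [MultilinearMap.map_sum]
  exact Finset.sum_congr rfl fun a _ => MultilinearMap.map_smul_univ _ _ _

/-- The Cauchy–Binet formula. The sum runs over all maps rather than the increasing ones, whence the
factor `k!`. -/
theorem factorial_mul_det_mul_eq_sum (M : Matrix (Fin k) m R) (N : Matrix m (Fin k) R) :
    (k.factorial : R) * (M * N).det =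
      ∑ a : Fin k → m, (M.submatrix id a).det * (N.submatrix a id).det := by
  have hperm (σ : Equiv.Perm (Fin k)) : (M * N).det = ∑ a : Fin k → m,
      ((Equiv.Perm.sign σ : ℤ) * ∏ i, M (σ i) (a i)) * (N.submatrix a id).det := by
    have hdet : (M.submatrix σ id * N).det = (Equiv.Perm.sign σ : ℤ) * (M * N).det :=
      det_permute σ (M * N)
    have hsign : ((Equiv.Perm.sign σ : ℤ) : R) * (Equiv.Perm.sign σ : ℤ) = 1 := by
      rw [← Int.cast_mul, ← Units.val_mul, Int.units_mul_self, Units.val_one, Int.cast_one]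
    rw [← one_mul (M * N).det, ← hsign, mul_assoc, ← hdet, det_mul_eq_sum_prod_mul_det,
      Finset.mul_sum]
    exact Finset.sum_congr rfl fun a _ => (mul_assoc _ _ _).symm
  calc (k.factorial : R) * (M * N).det
      = ∑ _σ : Equiv.Perm (Fin k), (M * N).det := by
        simp [Finset.card_univ, Fintype.card_perm]
    _ = _ := by
        rw [Finset.sum_congr rfl fun σ _ => hperm σ, Finset.sum_comm]
        simp only [det_apply', Finset.sum_mul, submatrix_apply, id]

end CauchyBinet

section PositiveDefinite

theorem pos_of_hasDerivAt_nonpos_of_tendsto_zero {f f' : ℝ → ℝ} {a : ℝ}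
    (hcont : ContinuousOn f (Set.Ici a)) (hderiv : ∀ t, a < t → HasDerivAt f (f' t) t)
    (hnonpos : ∀ t, a < t → f' t ≤ 0) (hneg : ∃ t, a < t ∧ f' t < 0)
    (hlim : Tendsto f atTop (𝓝 0)) : 0 < f a := by
  have hanti : AntitoneOn f (Set.Ici a) :=
    antitoneOn_of_deriv_nonpos (convex_Ici a) hcont
      (fun t ht => (hderiv t (by simpa using ht)).differentiableAt.differentiableWithinAt)
      fun t ht => by
        rw [interior_Ici] at ht
        exact (hderiv t ht).deriv ▸ hnonpos t ht
  have hnonneg (t : ℝ) (ht : a ≤ t) : 0 ≤ f t := le_of_tendsto hlim <| by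
    filter_upwards [eventually_ge_atTop t] with u hu
    exact hanti ht (ht.trans hu) hu
  by_contra! hfa
  obtain ⟨t, hat, hft⟩ := hneg
  have hzero : f =ᶠ[𝓝 t] fun _ => 0 := by
    filter_upwards [Ioi_mem_nhds hat] with u hu
    exact le_antisymm
      ((hanti Set.self_mem_Ici (Set.mem_Ici.2 (le_of_lt hu)) (le_of_lt hu)).trans hfa)
      (hnonneg u (le_of_lt hu))
  exact hft.ne ((hderiv t hat).unique ((hasDerivAt_const t (0 : ℝ)).congr_of_eventuallyEq hzero))

variable {ι : Type*}

theorem exists_pos_sum_mul_exp_neg_ne_zero [Fintype ι] {x : ι → ℝ} (hx : Function.Injective x)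
    {c : ι → ℝ} (hc : c ≠ 0) : ∃ t, 0 < t ∧ ∑ i, c i * Real.exp (-(x i * t)) ≠ 0 := by
  by_contra! h
  have hinj : Function.Injective fun i => powersHom ℝ (Real.exp (-x i)) :=
    (powersHom ℝ).injective.comp (Real.exp_injective.comp (neg_injective.comp hx))
  have hzero : (fun i => c i * Real.exp (-x i)) = 0 := funext <|
    Fintype.linearIndependent_iff.1
      ((linearIndependent_monoidHom (Multiplicative ℕ) ℝ).comp _ hinj) _ <| by
        ext m
        have hm := h (m.toAdd + 1) (by positivity)
        simp only [mul_add, neg_add, Real.exp_add, mul_one] at hm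
        simpa [← Real.exp_nat_mul, mul_assoc, mul_comm, mul_left_comm] using hm
  exact hc (funext fun i =>
    (mul_eq_zero.1 (congrFun hzero i)).resolve_right (Real.exp_ne_zero _))

theorem star_dotProduct_mulVec_eq_sum_sum [Fintype ι] (M : Matrix ι ι ℝ) (c : ι → ℝ) :
    star c ⬝ᵥ M *ᵥ c = ∑ i, ∑ j, c i * c j * M i j := by
  simp only [dotProduct, mulVec, Finset.mul_sum, star_trivial]
  exact Finset.sum_congr rfl fun i _ => Finset.sum_congr rfl fun j _ => by ring

theorem posDef_iff_sum_sum_mul_pos [Fintype ι] {M : Matrix ι ι ℝ} :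
    M.PosDef ↔ M.IsSymm ∧ ∀ c : ι → ℝ, c ≠ 0 → 0 < ∑ i, ∑ j, c i * c j * M i j := by
  rw [posDef_iff_dotProduct_mulVec, IsHermitian, conjTranspose_eq_transpose_of_trivial]
  simp only [star_dotProduct_mulVec_eq_sum_sum, IsSymm, ne_eq]

theorem sum_sum_mul_pos_of_hasDerivAt [Fintype ι] {k k' : ι → ι → ℝ → ℝ} {a : ℝ} {c : ι → ℝ}
    (hcont : ∀ i j, ContinuousOn (k i j) (Set.Ici a))
    (hderiv : ∀ i j t, a < t → HasDerivAt (k i j) (k' i j t) t)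
    (hnonpos : ∀ t, a < t → ∑ i, ∑ j, c i * c j * k' i j t ≤ 0)
    (hneg : ∃ t, a < t ∧ ∑ i, ∑ j, c i * c j * k' i j t < 0)
    (hlim : Tendsto (fun t => ∑ i, ∑ j, c i * c j * k i j t) atTop (𝓝 0)) :
    0 < ∑ i, ∑ j, c i * c j * k i j a :=
  pos_of_hasDerivAt_nonpos_of_tendsto_zero
    (f := fun t => ∑ i, ∑ j, c i * c j * k i j t)
    (continuousOn_finsetSum _ fun i _ => continuousOn_finsetSum _ fun j _ =>
      (hcont i j).const_mul _)
    (fun t ht => HasDerivAt.fun_sum fun i _ => HasDerivAt.fun_sum fun j _ =>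
      (hderiv i j t ht).const_mul _)
    hnonpos hneg hlim

theorem tendsto_sum_sum_mul [Fintype ι] {α : Type*} {l : Filter α} {k : ι → ι → α → ℝ}
    {y : ι → ι → ℝ} (c : ι → ℝ) (h : ∀ i j, Tendsto (k i j) l (𝓝 (y i j))) :
    Tendsto (fun t => ∑ i, ∑ j, c i * c j * k i j t) l (𝓝 (∑ i, ∑ j, c i * c j * y i j)) :=
  tendsto_finsetSum _ fun i _ => tendsto_finsetSum _ fun j _ => (h i j).const_mul _

theorem hasDerivAt_inv_mul_exp_neg_mul {b : ℝ} (hb : b ≠ 0) (t : ℝ) :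
    HasDerivAt (fun t => b⁻¹ * Real.exp (-(b * t))) (-Real.exp (-(b * t))) t :=
  ((((hasDerivAt_id t).const_mul b).fun_neg.exp).const_mul b⁻¹).congr_deriv <| by
    simp only [id]
    field_simp

theorem posDef_inv_add [Finite ι] {x : ι → ℝ} (hx : Function.Injective x) (hx0 : ∀ i, 0 < x i) :
    (of fun i j => (x i + x j)⁻¹ : Matrix ι ι ℝ).PosDef := by
  cases nonempty_fintype ι
  refine posDef_iff_sum_sum_mul_pos.2 ⟨IsSymm.ext fun i j => by simp [add_comm], fun c hc => ?_⟩
  have hs (i j : ι) : 0 < x i + x j := add_pos (hx0 i) (hx0 j)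
  have hsq (t : ℝ) : ∑ i, ∑ j, c i * c j * -Real.exp (-((x i + x j) * t)) =
      -(∑ i, c i * Real.exp (-(x i * t))) ^ 2 := by
    rw [sq, Finset.sum_mul_sum]
    simp only [← Finset.sum_neg_distrib, add_mul, neg_add, Real.exp_add]
    exact Finset.sum_congr rfl fun i _ => Finset.sum_congr rfl fun j _ => by ring
  have hlim (i j : ι) : Tendsto (fun t => (x i + x j)⁻¹ * Real.exp (-((x i + x j) * t)))
      atTop (𝓝 0) := by
    simpa using (Real.tendsto_exp_neg_atTop_nhds_zero.comp
      (tendsto_id.const_mul_atTop (hs i j))).const_mul (x i + x j)⁻¹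
  obtain ⟨t, ht, hF⟩ := exists_pos_sum_mul_exp_neg_ne_zero hx hc
  have hpos := sum_sum_mul_pos_of_hasDerivAt (a := 0) (c := c)
    (fun i j t _ => (hasDerivAt_inv_mul_exp_neg_mul (hs i j).ne' t).continuousAt.continuousWithinAt)
    (fun i j t _ => hasDerivAt_inv_mul_exp_neg_mul (hs i j).ne' t)
    (fun t _ => (hsq t).trans_le (neg_nonpos.2 (sq_nonneg _)))
    ⟨t, ht, (hsq t).trans_lt (neg_neg_of_pos (by positivity))⟩
    (by simpa using tendsto_sum_sum_mul c hlim)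
  simpa using hpos

theorem tendsto_add_mul_log_add_sub (s : ℝ) :
    Tendsto (fun t => (s + t) * Real.log (s + t) - (t * Real.log t + Real.log t * s))
      atTop (𝓝 s) := by
  have hlim : Tendsto (fun t => t * Real.log (1 + s / t) + s * (Real.log (t + s) - Real.log t))
      atTop (𝓝 s) := by
    simpa using (Real.tendsto_mul_log_one_add_div_atTop s).add
      ((Real.tendsto_log_comp_add_sub_log s).const_mul s)
  refine hlim.congr' ?_
  filter_upwards [eventually_gt_atTop 0, eventually_gt_atTop (-s)] with t ht hts
  have hsplit : 1 + s / t = (t + s) / t := by field_simp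
  rw [hsplit, Real.log_div (by linarith) ht.ne', add_comm s t]
  ring

section SumZero

variable [Fintype ι] {c : ι → ℝ}

theorem sum_sum_mul_affine_eq_zero (hc : ∑ i, c i = 0) (x : ι → ℝ) (α β : ℝ) :
    ∑ i, ∑ j, c i * c j * (α + β * (x i + x j)) = 0 := by
  calc ∑ i, ∑ j, c i * c j * (α + β * (x i + x j))
      = ∑ i, ∑ j, (c i * (α + β * x i) * c j + c i * (β * c j * x j)) :=
        Finset.sum_congr rfl fun i _ => Finset.sum_congr rfl fun j _ => by ring
    _ = 0 := by
        simp only [Finset.sum_add_distrib, ← Finset.sum_mul_sum, hc, mul_zero, zero_mul, add_zero]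

theorem sum_sum_mul_log_add_neg (hc : ∑ i, c i = 0) (hc0 : c ≠ 0) {x : ι → ℝ}
    (hx : Function.Injective x) (hx0 : ∀ i, 0 < x i) :
    ∑ i, ∑ j, c i * c j * Real.log (x i + x j) < 0 := by
  have hs (i j : ι) : 0 < x i + x j := add_pos (hx0 i) (hx0 j)
  have hderiv (i j : ι) (t : ℝ) (ht : 0 ≤ t) :
      HasDerivAt (fun t => -Real.log (x i + x j + t)) (-(x i + x j + t)⁻¹) t := by
    have hne : x i + x j + t ≠ 0 := (add_pos_of_pos_of_nonneg (hs i j) ht).ne'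
    simpa using (((hasDerivAt_id t).const_add (x i + x j)).log hne).fun_neg
  have hneg (t : ℝ) (ht : 0 < t) : ∑ i, ∑ j, c i * c j * -(x i + x j + t)⁻¹ < 0 := by
    have hpos := (posDef_iff_sum_sum_mul_pos.1 (posDef_inv_add (x := fun i => x i + t / 2)
      (fun i j hij => hx (add_right_cancel hij)) fun i => by have := hx0 i; positivity)).2 c hc0
    simp only [of_apply, add_add_add_comm, add_halves] at hpos
    simpa using hpos
  have hlim : Tendsto (fun t => ∑ i, ∑ j, c i * c j * -Real.log (x i + x j + t)) atTop (𝓝 0) := by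
    have hconst (β : ℝ) : ∑ i, ∑ j, c i * c j * β = 0 := by
      simpa using sum_sum_mul_affine_eq_zero hc x β 0
    have hsum := tendsto_sum_sum_mul c fun i j =>
      (Real.tendsto_log_comp_add_sub_log (x i + x j)).neg
    simpa only [neg_sub', mul_sub, Finset.sum_sub_distrib, hconst, sub_zero, neg_zero,
      add_comm _ (x _ + x _)] using hsum
  have hpos := sum_sum_mul_pos_of_hasDerivAt (a := 0)
    (fun i j t ht => (hderiv i j t ht).continuousAt.continuousWithinAt)
    (fun i j t ht => hderiv i j t ht.le) (fun t ht => (hneg t ht).le)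
    ⟨1, one_pos, hneg 1 one_pos⟩ hlim
  simpa using hpos

theorem sum_sum_mul_add_mul_log_add_pos (hc : ∑ i, c i = 0) (hc0 : c ≠ 0) {x : ι → ℝ}
    (hx : Function.Injective x) (hx0 : ∀ i, 0 ≤ x i) :
    0 < ∑ i, ∑ j, c i * c j * ((x i + x j) * Real.log (x i + x j)) := by
  have hs (i j : ι) : 0 ≤ x i + x j := add_nonneg (hx0 i) (hx0 j)
  have hderiv (i j : ι) (t : ℝ) (ht : 0 < t) :
      HasDerivAt (fun t => (x i + x j + t) * Real.log (x i + x j + t))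
        (Real.log (x i + x j + t) + 1) t :=
    (Real.hasDerivAt_mul_log (add_pos_of_nonneg_of_pos (hs i j) ht).ne').comp_const_add _ _
  have hneg (t : ℝ) (ht : 0 < t) :
      ∑ i, ∑ j, c i * c j * (Real.log (x i + x j + t) + 1) < 0 := by
    have hlog := sum_sum_mul_log_add_neg hc hc0 (x := fun i => x i + t / 2)
      (fun i j hij => hx (add_right_cancel hij)) (fun i => by have := hx0 i; positivity)
    have hone := sum_sum_mul_affine_eq_zero hc x 1 0
    simp only [add_add_add_comm, add_halves] at hlog
    simp only [zero_mul, add_zero] at hone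
    simpa only [mul_add, Finset.sum_add_distrib, hone, add_zero] using hlog
  have hlim : Tendsto (fun t => ∑ i, ∑ j, c i * c j *
      ((x i + x j + t) * Real.log (x i + x j + t))) atTop (𝓝 0) := by
    have hsum := tendsto_sum_sum_mul c fun i j => tendsto_add_mul_log_add_sub (x i + x j)
    have hlin := sum_sum_mul_affine_eq_zero hc x 0 1
    simp only [zero_add, one_mul] at hlin
    simpa only [mul_sub, Finset.sum_sub_distrib, sum_sum_mul_affine_eq_zero hc, sub_zero, hlin]
      using hsum
  have hpos := sum_sum_mul_pos_of_hasDerivAt (a := 0)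
    (fun i j => (Real.continuous_mul_log.comp (continuous_const_add (x i + x j))).continuousOn)
    hderiv (fun t ht => (hneg t ht).le) ⟨1, one_pos, hneg 1 one_pos⟩ hlim
  simpa using hpos

end SumZero

theorem sum_sum_mul_option_elim [Fintype ι] (K : Matrix (Option ι) (Option ι) ℝ) (c : ι → ℝ) :
    ∑ o, ∑ p, Option.elim o (-∑ i, c i) c * Option.elim p (-∑ i, c i) c * K o p =
      ∑ i, ∑ j, c i * c j *
        (K (some i) (some j) - K (some i) none - K none (some j) + K none none) := by
  have hcol (S : ℝ) : ∑ i, c i * -S * K (some i) none = -∑ i, c i * S * K (some i) none := by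
    simp
  have hrow (S : ℝ) : ∑ j, -S * c j * K none (some j) = -∑ j, S * c j * K none (some j) := by
    simp
  simp only [Fintype.sum_option, Option.elim, Finset.sum_add_distrib, mul_add, mul_sub,
    Finset.sum_sub_distrib, hcol, hrow, neg_mul_neg]
  simp only [Finset.sum_comm (f := fun i j => c i * c j * K none (some j)), ← Finset.sum_mul,
    ← Finset.mul_sum]
  ring

theorem posDef_add_mul_log_add_sub [Finite ι] {x : ι → ℝ} (hx : Function.Injective x)
    (hx0 : ∀ i, 0 < x i) :
    (of fun i j => (x i + x j) * Real.log (x i + x j) - x i * Real.log (x i) -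
      x j * Real.log (x j) : Matrix ι ι ℝ).PosDef := by
  cases nonempty_fintype ι
  refine posDef_iff_sum_sum_mul_pos.2
    ⟨IsSymm.ext fun i j => by simp only [of_apply, add_comm]; ring, fun c hc => ?_⟩
  -- The extra node `0`, where `z log z` vanishes, carries the weight that makes the total zero.
  let x' : Option ι → ℝ := fun o => o.elim 0 x
  have hx' : Function.Injective x' :=
    Option.injective_iff.2 ⟨hx, fun ⟨i, hi⟩ => (hx0 i).ne' hi⟩
  have hpos := sum_sum_mul_add_mul_log_add_pos (c := fun o => o.elim (-∑ i, c i) c)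
    (by simp [Fintype.sum_option]) (fun h => hc (funext fun i => congrFun h (some i))) hx'
    (Option.forall.2 ⟨le_rfl, fun i => (hx0 i).le⟩)
  rw [sum_sum_mul_option_elim fun o p => (x' o + x' p) * Real.log (x' o + x' p)] at hpos
  simpa [x'] using hpos

theorem posSemidef_map_pow [Finite ι] {M : Matrix ι ι ℝ} (hM : M.PosSemidef) (m : ℕ) :
    (M.map (· ^ m)).PosSemidef := by
  induction m with
  | zero =>
    have : M.map (· ^ 0) = vecMulVec 1 (star 1) := by ext; simp [vecMulVec_apply]
    exact this ▸ posSemidef_vecMulVec_self_star _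
  | succ m ih =>
    have : M.map (· ^ (m + 1)) = M.map (· ^ m) ⊙ M := by ext; simp [pow_succ]
    exact this ▸ ih.hadamard hM

theorem posDef_map_exp [Finite ι] {M : Matrix ι ι ℝ} (hM : M.PosDef) :
    (M.map Real.exp).PosDef := by
  cases nonempty_fintype ι
  obtain ⟨hsymm, hpos⟩ := posDef_iff_sum_sum_mul_pos.1 hM
  refine posDef_iff_sum_sum_mul_pos.2 ⟨hsymm.map _, fun c hc => (hpos c hc).trans_le ?_⟩
  have hsum : HasSum (fun m : ℕ => ∑ i, ∑ j, c i * c j * (M i j ^ m / m.factorial))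
      (∑ i, ∑ j, c i * c j * Real.exp (M i j)) :=
    hasSum_sum fun i _ => hasSum_sum fun j _ =>
      (Real.exp_eq_exp_ℝ ▸ NormedSpace.expSeries_div_hasSum_exp (M i j)).mul_left _
  have hterm (m : ℕ) : 0 ≤ ∑ i, ∑ j, c i * c j * (M i j ^ m / m.factorial) := by
    have := (posSemidef_map_pow hM.posSemidef m).dotProduct_mulVec_nonneg c
    simp only [star_dotProduct_mulVec_eq_sum_sum, map_apply] at this
    simp only [← mul_div_assoc, ← Finset.sum_div]
    positivity
  simpa using le_hasSum hsum 1 fun m _ => hterm m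

theorem posDef_add_rpow_add_mul [Finite ι] {x : ι → ℝ} (hx : Function.Injective x)
    (hx0 : ∀ i, 0 < x i) {r : ℝ} (hr : 0 < r) :
    (of fun i j => (x i + x j) ^ ((x i + x j) * r) : Matrix ι ι ℝ).PosDef := by
  classical
  cases nonempty_fintype ι
  let e : ι → ℝ := fun i => Real.exp (r * (x i * Real.log (x i)))
  have he : IsUnit (diagonal e) :=
    isUnit_diagonal.2 (Pi.isUnit_iff.2 fun i => (Real.exp_ne_zero _).isUnit)
  have hexp := posDef_map_exp ((posDef_add_mul_log_add_sub hx hx0).smul hr)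
  have hconj := he.posDef_star_left_conjugate_iff.2 hexp
  convert hconj using 1
  ext i j
  have hs : 0 < x i + x j := add_pos (hx0 i) (hx0 j)
  simp only [star_eq_conjTranspose, diagonal_conjTranspose, star_trivial, mul_diagonal,
    diagonal_mul, of_apply, map_apply, Matrix.smul_apply, smul_eq_mul, e, Real.rpow_def_of_pos hs,
    ← Real.exp_add]
  ring_nf

end PositiveDefinite

section Hankel

open scoped ComplexOrder MatrixOrder in
theorem exists_simultaneous_diagonalization {𝕜 ι : Type*} [RCLike 𝕜] [Fintype ι] [DecidableEq ι]
    {A B : Matrix ι ι 𝕜} (hA : A.PosDef) (hB : B.PosDef) :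
    ∃ (P : Matrix ι ι 𝕜) (d : ι → ℝ), IsUnit P ∧ (∀ i, 0 < d i) ∧
      A = Pᴴ * P ∧ B = Pᴴ * diagonal (RCLike.ofReal ∘ d) * P := by
  obtain ⟨Q, hQ, hAQ⟩ := CStarAlgebra.isStrictlyPositive_iff_eq_star_mul_self.1
    hA.isStrictlyPositive
  obtain ⟨R, hRQ⟩ := hQ.exists_left_inv
  have hC : (Rᴴ * B * R).PosDef :=
    (IsUnit.of_mul_eq_one _ hRQ).posDef_star_left_conjugate_iff.2 hB
  obtain ⟨U, d, hU, hd, hspec⟩ : ∃ (U : Matrix ι ι 𝕜) (d : ι → ℝ), U * Uᴴ = 1 ∧ (∀ i, 0 < d i) ∧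
      Rᴴ * B * R = U * diagonal (RCLike.ofReal ∘ d) * Uᴴ :=
    ⟨hC.1.eigenvectorUnitary, hC.1.eigenvalues,
      Unitary.mul_star_self_of_mem hC.1.eigenvectorUnitary.2, hC.eigenvalues_pos,
      hC.1.spectral_theorem⟩
  refine ⟨Uᴴ * Q, d, (IsUnit.of_mul_eq_one _ (mul_eq_one_comm.1 hU)).mul hQ, hd, ?_, ?_⟩
  · rw [conjTranspose_mul, conjTranspose_conjTranspose, Matrix.mul_assoc,
      ← Matrix.mul_assoc U, hU, Matrix.one_mul, hAQ, star_eq_conjTranspose]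
  · calc B = (R * Q)ᴴ * B * (R * Q) := by simp [hRQ]
      _ = Qᴴ * (Rᴴ * B * R) * Q := by simp only [conjTranspose_mul, Matrix.mul_assoc]
      _ = (Uᴴ * Q)ᴴ * diagonal (RCLike.ofReal ∘ d) * (Uᴴ * Q) := by
        rw [hspec]
        simp only [conjTranspose_mul, conjTranspose_conjTranspose, Matrix.mul_assoc]

/-- The `n × n` Hankel matrix `(a (i + j))` of a sequence `a`, indexed from `0`. -/
def hankel {α : Type*} (n : ℕ) (a : ℕ → α) : Matrix (Fin n) (Fin n) α :=
  of fun i j => a (i + j)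

theorem eq_diagonal_mul_vandermonde {R : Type*} [CommRing R] {n : ℕ}
    {P : Matrix (Fin (n + 1)) (Fin (n + 1)) R} {d : Fin (n + 1) → R}
    (h : ∀ b (i : Fin n), P b i.succ = d b * P b i.castSucc) :
    P = diagonal (fun b => P b 0) * vandermonde d := by
  have hpow (b i : Fin (n + 1)) : P b i = d b ^ (i : ℕ) * P b 0 := by
    induction i using Fin.induction with
    | zero => simp
    | succ i ih => rw [h, ih, Fin.val_succ, pow_succ', mul_assoc, Fin.val_castSucc]
  ext b i
  rw [diagonal_mul, vandermonde_apply, hpow, mul_comm]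

/-- Gauss quadrature: the sequence `a` has the moments of a measure with positive masses `w` at
positive nodes `d`. -/
theorem exists_hankel_eq_vandermonde_transpose_mul {n : ℕ} {a : ℕ → ℝ} (h₀ : (hankel n a).PosDef)
    (h₁ : (hankel n fun m => a (m + 1)).PosDef) :
    ∃ d w : Fin n → ℝ, Function.Injective d ∧ (∀ i, 0 < d i) ∧ (∀ i, 0 < w i) ∧
      hankel n a = (vandermonde d)ᵀ * diagonal w * vandermonde d := by
  obtain _ | n := n
  · exact ⟨0, 0, Function.injective_of_subsingleton _, fun i => i.elim0, fun i => i.elim0,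
      Subsingleton.elim _ _⟩
  obtain ⟨P, d, hP, hd, h0, h1⟩ := exists_simultaneous_diagonalization h₀ h₁
  have hrec (b : Fin (n + 1)) (i : Fin n) : P b i.succ = d b * P b i.castSucc := by
    have hcol : Pᴴ *ᵥ P.col i.succ = Pᴴ *ᵥ (diagonal d * P).col i.castSucc := by
      have hshift : (hankel (n + 1) a).col i.succ =
          (hankel (n + 1) fun m => a (m + 1)).col i.castSucc := by
        ext j
        simp [hankel, add_assoc]
      rw [h0, h1, Matrix.mul_assoc] at hshift
      exact hshift
    simpa using congrFun (mulVec_injective_of_isUnit hP.star hcol) b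
  have hPV := eq_diagonal_mul_vandermonde hrec
  have hdet : (∏ b, P b 0) * (vandermonde d).det ≠ 0 := by
    rw [← det_diagonal, ← det_mul, ← hPV]
    exact ((isUnit_iff_isUnit_det P).1 hP).ne_zero
  refine ⟨d, fun b => P b 0 ^ 2, det_vandermonde_ne_zero_iff.1 (right_ne_zero_of_mul hdet), hd,
    fun b => ?_, ?_⟩
  · have := Finset.prod_ne_zero_iff.1 (left_ne_zero_of_mul hdet) b (Finset.mem_univ b)
    positivity
  · rw [h0]
    calc Pᴴ * P = (vandermonde d)ᵀ * (diagonal (fun b => P b 0) * diagonal fun b => P b 0) *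
          vandermonde d := by
          conv_lhs => rw [hPV]
          simp only [conjTranspose_eq_transpose_of_trivial, transpose_mul, diagonal_transpose,
            Matrix.mul_assoc]
      _ = _ := by simp only [diagonal_mul_diagonal, sq]

/-- A matrix is strictly totally positive if every minor is positive. The strictly monotone maps `f`
and `g` list the selected rows and columns in increasing order. -/
def IsStrictlyTotallyPositive {m n R : Type*} [Preorder m] [Preorder n] [CommRing R] [LT R]
    (A : Matrix m n R) : Prop :=
  ∀ (k : ℕ) (f : Fin k → m) (g : Fin k → n), StrictMono f → StrictMono g →
    0 < (A.submatrix f g).det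

theorem isStrictlyTotallyPositive_vandermonde_transpose_mul {n : ℕ} {d w : Fin n → ℝ}
    (hd : Function.Injective d) (hd0 : ∀ i, 0 < d i) (hw : ∀ i, 0 < w i) :
    IsStrictlyTotallyPositive ((vandermonde d)ᵀ * diagonal w * vandermonde d) := by
  intro k f g hf hg
  let D (h b : Fin k → Fin n) : ℝ := (of fun i j => d (b i) ^ (h j : ℕ)).det
  have hf' : StrictMono fun j => (f j : ℕ) := Fin.val_strictMono.comp hf
  have hg' : StrictMono fun j => (g j : ℕ) := Fin.val_strictMono.comp hg
  have hleft (b : Fin k → Fin n) :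
      (((vandermonde d)ᵀ * diagonal w).submatrix (f ∘ id) b).det = (∏ i, w (b i)) * D f b := by
    simp only [D]
    rw [← det_transpose (of fun i j => d (b i) ^ (f j : ℕ)), ← det_mul_row]
    congr 1
    ext i j
    simp [vandermonde_apply, mul_comm]
  have hsum : (k.factorial : ℝ) *
      (((vandermonde d)ᵀ * diagonal w * vandermonde d).submatrix f g).det =
        ∑ b : Fin k → Fin n, (∏ i, w (b i)) * (D f b * D g b) := by
    rw [submatrix_mul _ _ f id g Function.bijective_id, factorial_mul_det_mul_eq_sum]
    simp only [submatrix_submatrix, Function.id_comp, hleft, mul_assoc]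
    rfl
  have hprod (b : Fin k → Fin n) : 0 < ∏ i, w (b i) := Finset.prod_pos fun i _ => hw (b i)
  refine pos_of_mul_pos_right (hsum ▸ Finset.sum_pos' (fun b _ => ?_) ⟨f, Finset.mem_univ f, ?_⟩)
    k.factorial.cast_nonneg
  · exact mul_nonneg (hprod b).le (det_pow_mul_det_pow_nonneg (fun i => hd0 (b i)) hf' hg')
  · exact mul_pos (hprod f)
      (det_pow_mul_det_pow_pos (hd.comp hf.injective) (fun i => hd0 (f i)) hf' hg')

theorem isStrictlyTotallyPositive_hankel {n : ℕ} {a : ℕ → ℝ} (h₀ : (hankel n a).PosDef)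
    (h₁ : (hankel n fun m => a (m + 1)).PosDef) : IsStrictlyTotallyPositive (hankel n a) := by
  obtain ⟨d, w, hd, hd0, hw, h⟩ := exists_hankel_eq_vandermonde_transpose_mul h₀ h₁
  exact h ▸ isStrictlyTotallyPositive_vandermonde_transpose_mul hd hd0 hw

theorem stmt_12_general (n : ℕ) {c r : ℝ} (hc : 0 < c) (hr : 0 < r) :
    IsStrictlyTotallyPositive (hankel n fun m => ((m : ℝ) + c) ^ ((m + c) * r)) := by
  have hposDef {c : ℝ} (hc : 0 < c) :
      (hankel n fun m => ((m : ℝ) + c) ^ ((m + c) * r)).PosDef := by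
    convert posDef_add_rpow_add_mul (x := fun i : Fin n => (i : ℝ) + c / 2)
      (fun i j hij => by simpa [Fin.val_inj] using hij) (fun i => by positivity) hr using 1
    ext i j
    simp only [hankel, of_apply, Nat.cast_add, add_add_add_comm, add_halves]
  refine isStrictlyTotallyPositive_hankel (hposDef hc) ?_
  simpa only [Nat.cast_add_one, add_assoc, add_comm 1 c] using hposDef (add_pos one_pos hc)

end Hankel

/-- Every positive entrywise power of the matrix `A = [(i+j−1)^(i+j−1)]`
(indices running from 1 to n) is strictly totally positive. -/
theorem stmt_12 (n : ℕ) (r : ℝ) (hr : 0 < r)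
    (k : ℕ) (f g : Fin k → Fin n) (hf : StrictMono f) (hg : StrictMono g) :
    0 < ((Matrix.of fun i j : Fin n =>
        (((i : ℕ) + 1 + ((j : ℕ) + 1) - 1 : ℕ) : ℝ) ^
          ((((i : ℕ) + 1 + ((j : ℕ) + 1) - 1 : ℕ) : ℝ) * r)).submatrix f g).det := by
  convert stmt_12_general n one_pos hr k f g hf hg using 3
  ext i j
  have hij : (i : ℕ) + 1 + (j + 1) - 1 = i + j + 1 := by omega
  rw [of_apply, hankel, of_apply, hij, Nat.cast_add_one]
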